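/- Let d ≥ 2 be an integer and let n_Z be a d×d real symmetric positive semidefinite matrix with 0 < rank(n_Z) < d; set n := (0, 0, n_Z) ∈ E and F_s := {(x, 0, Z) ∈ E : x ≤ 0, Z positive semidefinite, tr(Z·n_Z) = 0} (which equals K_logdet ∩ {n}^⊥). Then for every η > 0 there exists κ > 0 such that for every q ∈ E with ⟨q, n⟩ = 0 and ‖q‖ ≤ η one has dist(q, F_s) ≤ κ · g_log(dist(q, K_logdet)). -/

import Mathlib

/-!
Let `p = (x', y', Z')` lie in the log-determinant cone `K` with `‖q - p‖ ≤ t < 1`; write `N = n_Z`,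
`u = √t`. Since `tr (Z N) = 0`, Cauchy–Schwarz-type bounds give `tr (Z' N) = O(t)`, and factoring
`N = BᴴB`, `Z' = AᴴA` upgrades this to `‖N Z'‖ = O(u)` (`norm_mul_sq_le`). This one estimate has
two consequences.

* Compressing `Z'` to `ker N` gives a positive semidefinite `W` with `tr (W N) = 0` and
  `‖Z' - W‖ = O(‖N Z'‖) = O(u)` (`psd_facial`).
* Since `det Z' · tr N = tr (adj Z' · Z' N)` and `tr N > 0`, we get `det Z' = O(u)`
  (`det_mul_trace_le`). When `y' > 0` the cone inequality becomes
  `x' ≤ y' (log c + log u - d log y')` with `x'` bounded below, and this forces both `y'` and the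
  positive part of `x'` to be `O(1 / (-log u))` (`scalar_bound`).

Hence `(min x' 0, 0, W)` is a point of `F_s` at distance `O(1 / (-log t))` from `q`
(`point_bound`). Letting `t` decrease to `dist (q, K)`, right continuity of `g_log`
(`glog_tendsto`) yields the claim; this also covers `dist (q, K) = 0` without showing that `K` is
closed. For `t > e⁻²` the trivial bound `dist (q, F_s) ≤ ‖q‖ ≤ η` suffices, because `g_log t ≥ 1/2`.
-/

open Matrix Filter

noncomputable section

/-- The space `E = ℝ × ℝ × S^d` (matrix parts are required to be symmetric where relevant). -/
abbrev E (d : ℕ) : Type := ℝ × ℝ × Matrix (Fin d) (Fin d) ℝ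

/-- The inner product `⟨(x,y,Z),(x',y',Z')⟩ = x x' + y y' + tr (Z Z')` on `E`. -/
def ip {d : ℕ} (p q : E d) : ℝ := p.1 * q.1 + p.2.1 * q.2.1 + (p.2.2 * q.2.2).trace

/-- The induced norm `‖(x,y,Z)‖ = sqrt (x² + y² + tr (Z²))` on `E`. -/
def nrm {d : ℕ} (p : E d) : ℝ := Real.sqrt (p.1 ^ 2 + p.2.1 ^ 2 + (p.2.2 * p.2.2).trace)

/-- Distance from a point to a set: `dist(p, S) = inf {‖p - s‖ : s ∈ S}`. -/
def sdist {d : ℕ} (p : E d) (S : Set (E d)) : ℝ := sInf {r : ℝ | ∃ s ∈ S, r = nrm (p - s)}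

/-- The log-determinant cone `K_logdet`. -/
def Klogdet (d : ℕ) : Set (E d) :=
  {p | (0 < p.2.1 ∧ p.2.2.PosDef ∧ p.1 ≤ p.2.1 * Real.log ((p.2.1⁻¹ • p.2.2).det))
    ∨ (p.1 ≤ 0 ∧ p.2.1 = 0 ∧ p.2.2.PosSemidef)}

/-- The log-type residual function `g_log`. -/
def glog (t : ℝ) : ℝ :=
  if t = 0 then 0
  else if t ≤ Real.exp (-2) then -1 / Real.log t
  else 1 / 4 + Real.exp 2 / 4 * t

/-! ### The scalar inequality -/

/-- Both bounds come from `y (b - log y) ≤ exp b`: with `b = 0` it controls `-y log y`, and with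
`b = (log c + log u) / d` it gives `x ≤ d (c u) ^ (1 / d)`, which is `O(1 / (-log u))`. -/
lemma scalar_bound (d : ℕ) (hd : 0 < d) (c M : ℝ) (hM : 0 < M) :
    ∃ C : ℝ, 0 < C ∧ ∀ x y u : ℝ, 0 < y → 0 < u → u < 1 → -M ≤ x → y ≤ M →
      x ≤ y * (Real.log c + Real.log u - d * Real.log y) →
      y * (-Real.log u) ≤ C ∧ x * (-Real.log u) ≤ C := by
  have hd' : (0 : ℝ) < d := by exact_mod_cast hd
  set a := Real.log c with ha
  refine ⟨M + M * |a| + d + d * d * Real.exp (a / d), by positivity, ?_⟩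
  intro x y u hy hu hu1 hx hyM hxy
  have hL : 0 < -Real.log u := neg_pos.mpr (Real.log_neg hu hu1)
  have hE : 0 < d * d * Real.exp (a / d) := by positivity
  have key : ∀ b : ℝ, y * (b - Real.log y) ≤ Real.exp b := by
    intro b
    have h1 := Real.add_one_le_exp (b - Real.log y)
    rw [Real.exp_sub, Real.exp_log hy, le_div_iff₀ hy] at h1
    nlinarith
  constructor
  · have h0 := key 0
    rw [Real.exp_zero] at h0
    have h1 : y * a ≤ M * |a| := by
      calc y * a ≤ y * |a| := by gcongr; exact le_abs_self a
        _ ≤ _ := by gcongr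
    nlinarith
  · have h0 := key ((a + Real.log u) / d)
    have h1 : x ≤ d * Real.exp ((a + Real.log u) / d) := by
      calc x ≤ _ := hxy
        _ = d * (y * ((a + Real.log u) / d - Real.log y)) := by field_simp
        _ ≤ _ := by gcongr
    have h2 : Real.exp (Real.log u / d) * (-Real.log u) ≤ d := by
      have h3 := Real.add_one_le_exp (-Real.log u / d)
      have h4 : Real.exp (Real.log u / d) * Real.exp (-Real.log u / d) = 1 := by
        rw [← Real.exp_add]; ring_nf; exact Real.exp_zero
      have h5 : -Real.log u ≤ d * Real.exp (-Real.log u / d) := by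
        rw [← div_le_iff₀' hd']; linarith
      calc _ ≤ Real.exp (Real.log u / d) * (d * Real.exp (-Real.log u / d)) := by gcongr
        _ = d := by rw [mul_left_comm, h4, mul_one]
    calc x * (-Real.log u) ≤ d * Real.exp ((a + Real.log u) / d) * (-Real.log u) := by gcongr
      _ = d * Real.exp (a / d) * (Real.exp (Real.log u / d) * (-Real.log u)) := by
          rw [add_div, Real.exp_add]; ring
      _ ≤ d * Real.exp (a / d) * d := by gcongr
      _ ≤ _ := by nlinarith [mul_nonneg hM.le (abs_nonneg a)]

/-! ### Frobenius-norm estimates for positive semidefinite matrices -/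

section Frobenius

open scoped Matrix.Norms.Frobenius

variable {d : ℕ}

lemma frob_sq (A : Matrix (Fin d) (Fin d) ℝ) : ‖A‖ ^ 2 = (Aᴴ * A).trace := by
  rw [frobenius_norm_def, ← Real.sqrt_eq_rpow, Real.sq_sqrt (by positivity)]
  simp only [Matrix.trace, Matrix.diag, Matrix.mul_apply, conjTranspose_apply, star_trivial]
  rw [Finset.sum_comm]
  refine Finset.sum_congr rfl fun i _ => Finset.sum_congr rfl fun j _ => ?_
  simp [sq]

lemma abs_trace_le (A : Matrix (Fin d) (Fin d) ℝ) : |A.trace| ≤ d * ‖A‖ := by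
  have h : ∀ i, |A i i| ≤ ‖A‖ := by
    intro i
    have h2 : (A i i) ^ 2 ≤ ‖A‖ ^ 2 := by
      rw [frobenius_norm_def, ← Real.sqrt_eq_rpow, Real.sq_sqrt (by positivity)]
      have h3 := Finset.single_le_sum (f := fun j => ‖A i j‖ ^ (2 : ℝ))
        (fun j _ => by positivity) (Finset.mem_univ i)
      have h4 := Finset.single_le_sum (f := fun k => ∑ j, ‖A k j‖ ^ (2 : ℝ))
        (fun j _ => by positivity) (Finset.mem_univ i)
      have h5 : (A i i) ^ 2 = ‖A i i‖ ^ (2 : ℝ) := by simp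
      rw [h5]
      exact h3.trans h4
    exact abs_le_of_sq_le_sq h2 (norm_nonneg _)
  calc |A.trace| ≤ ∑ i, |A i i| := Finset.abs_sum_le_sum_abs _ _
    _ ≤ ∑ _i : Fin d, ‖A‖ := Finset.sum_le_sum fun i _ => h i
    _ = d * ‖A‖ := by simp

lemma exists_diag {A : Matrix (Fin d) (Fin d) ℝ} (hA : A.PosSemidef) :
    ∃ (U : Matrix (Fin d) (Fin d) ℝ) (l : Fin d → ℝ),
      Uᴴ * U = 1 ∧ (∀ i, 0 ≤ l i) ∧ A = U * diagonal l * Uᴴ := by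
  refine ⟨hA.1.eigenvectorUnitary, hA.1.eigenvalues, ?_, hA.eigenvalues_nonneg, ?_⟩
  · exact Unitary.coe_star_mul_self hA.1.eigenvectorUnitary
  · have h := hA.1.spectral_theorem
    rw [Unitary.conjStarAlgAut_apply] at h
    exact h

lemma exists_factor {A : Matrix (Fin d) (Fin d) ℝ} (hA : A.PosSemidef) :
    ∃ B : Matrix (Fin d) (Fin d) ℝ, A = Bᴴ * B := by
  obtain ⟨U, l, -, hl, h⟩ := exists_diag hA
  refine ⟨diagonal (fun i => Real.sqrt (l i)) * Uᴴ, ?_⟩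
  have h2 : diagonal l =
      diagonal (fun i => Real.sqrt (l i)) * diagonal (fun i => Real.sqrt (l i)) := by
    rw [diagonal_mul_diagonal]
    congr 1
    ext i
    exact (Real.mul_self_sqrt (hl i)).symm
  rw [h, h2, conjTranspose_mul, conjTranspose_conjTranspose, diagonal_conjTranspose]
  simp only [star_trivial, Matrix.mul_assoc]

/-- A Hermitian generalized inverse `G` of `A`, commuting with `A`; then `1 - G A` is the orthogonal
projection onto `ker A`. -/
lemma exists_pinv {A : Matrix (Fin d) (Fin d) ℝ} (hA : A.PosSemidef) :
    ∃ G : Matrix (Fin d) (Fin d) ℝ, Gᴴ = G ∧ G * A = A * G ∧ G * A * A = A := by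
  obtain ⟨U, l, hU, hl, h⟩ := exists_diag hA
  have key : ∀ D D' : Matrix (Fin d) (Fin d) ℝ,
      (U * D * Uᴴ) * (U * D' * Uᴴ) = U * (D * D') * Uᴴ := by
    intro D D'
    calc (U * D * Uᴴ) * (U * D' * Uᴴ) = U * D * (Uᴴ * U) * D' * Uᴴ := by
          simp only [Matrix.mul_assoc]
      _ = _ := by rw [hU]; simp only [Matrix.mul_assoc, Matrix.one_mul]
  refine ⟨U * diagonal (fun i => (l i)⁻¹) * Uᴴ, ?_, ?_, ?_⟩
  · simp [Matrix.mul_assoc]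
  · rw [h, key, key]
    simp [mul_comm]
  · rw [h, key, key]
    congr 2
    simp only [diagonal_mul_diagonal]
    congr 1
    ext i
    by_cases hi : l i = 0 <;> simp [hi]

/-- With `N = BᴴB` and `Z = AᴴA` one has `N Z = Bᴴ (B Aᴴ) A`, and `‖B Aᴴ‖² = tr (Z N)`,
`‖B‖² = tr N`, `‖A‖² = tr Z`. -/
lemma norm_mul_sq_le {N Z : Matrix (Fin d) (Fin d) ℝ} (hN : N.PosSemidef) (hZ : Z.PosSemidef) :
    ‖N * Z‖ ^ 2 ≤ N.trace * Z.trace * (Z * N).trace := by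
  obtain ⟨A, rfl⟩ := exists_factor hZ
  obtain ⟨B, rfl⟩ := exists_factor hN
  have h1 : ‖Bᴴ * B * (Aᴴ * A)‖ ≤ ‖B‖ * ‖B * Aᴴ‖ * ‖A‖ := by
    calc ‖Bᴴ * B * (Aᴴ * A)‖ = ‖Bᴴ * (B * Aᴴ) * A‖ := by simp only [Matrix.mul_assoc]
      _ ≤ ‖Bᴴ * (B * Aᴴ)‖ * ‖A‖ := frobenius_norm_mul _ _
      _ ≤ ‖Bᴴ‖ * ‖B * Aᴴ‖ * ‖A‖ := by gcongr; exact frobenius_norm_mul _ _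
      _ = _ := by rw [frobenius_norm_conjTranspose]
  have h2 : ‖B * Aᴴ‖ ^ 2 = (Aᴴ * A * (Bᴴ * B)).trace := by
    rw [frob_sq, conjTranspose_mul, conjTranspose_conjTranspose]
    calc (A * Bᴴ * (B * Aᴴ)).trace = ((A * (Bᴴ * B)) * Aᴴ).trace := by
          simp only [Matrix.mul_assoc]
      _ = (Aᴴ * (A * (Bᴴ * B))).trace := trace_mul_comm _ _
      _ = _ := by simp only [Matrix.mul_assoc]
  calc _ ≤ (‖B‖ * ‖B * Aᴴ‖ * ‖A‖) ^ 2 := by gcongr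
    _ = ‖B‖ ^ 2 * ‖A‖ ^ 2 * ‖B * Aᴴ‖ ^ 2 := by ring
    _ = _ := by rw [frob_sq B, frob_sq A, h2]

lemma exists_adjugate_bound (R : ℝ) :
    ∃ K : ℝ, 0 < K ∧ ∀ Z : Matrix (Fin d) (Fin d) ℝ, ‖Z‖ ≤ R → ‖adjugate Z‖ ≤ K := by
  have : ProperSpace (Matrix (Fin d) (Fin d) ℝ) := FiniteDimensional.proper ℝ _
  have hc : IsCompact (Metric.closedBall (0 : Matrix (Fin d) (Fin d) ℝ) R) :=
    isCompact_closedBall _ _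
  obtain ⟨C, hC⟩ := hc.exists_bound_of_continuousOn
    (f := fun Z : Matrix (Fin d) (Fin d) ℝ => adjugate Z)
    (Continuous.matrix_adjugate continuous_id).continuousOn
  refine ⟨max C 1, by positivity, fun Z hZ => (hC Z ?_).trans (le_max_left _ _)⟩
  simpa using hZ

/-- Take the trace of `adj Z · Z · N = det Z · N`. -/
lemma det_mul_trace_le {N Z : Matrix (Fin d) (Fin d) ℝ} :
    Z.det * N.trace ≤ d * (‖adjugate Z‖ * ‖Z * N‖) := by
  have h : Z.det * N.trace = (adjugate Z * (Z * N)).trace := by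
    rw [← Matrix.mul_assoc, adjugate_mul]
    simp
  rw [h]
  refine (le_abs_self _).trans ((abs_trace_le _).trans ?_)
  gcongr
  exact frobenius_norm_mul _ _

lemma nrm_le (p : E d) (hp : p.2.2.IsSymm) : nrm p ≤ |p.1| + |p.2.1| + ‖p.2.2‖ := by
  have h : (p.2.2 * p.2.2).trace = ‖p.2.2‖ ^ 2 := by
    rw [frob_sq, conjTranspose_eq_transpose_of_trivial, hp.eq]
  unfold nrm
  rw [h]
  apply Real.sqrt_le_iff.mpr
  refine ⟨by positivity, ?_⟩
  have h1 := abs_nonneg p.1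
  have h2 := abs_nonneg p.2.1
  have h3 := norm_nonneg p.2.2
  rw [← sq_abs p.1, ← sq_abs p.2.1]
  nlinarith [mul_nonneg h1 h2, mul_nonneg h1 h3, mul_nonneg h2 h3]

lemma le_nrm (p : E d) (hp : p.2.2.IsSymm) :
    |p.1| ≤ nrm p ∧ |p.2.1| ≤ nrm p ∧ ‖p.2.2‖ ≤ nrm p := by
  have h : (p.2.2 * p.2.2).trace = ‖p.2.2‖ ^ 2 := by
    rw [frob_sq, conjTranspose_eq_transpose_of_trivial, hp.eq]
  unfold nrm
  rw [h]
  have h1 := sq_nonneg p.1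
  have h2 := sq_nonneg p.2.1
  have h3 := sq_nonneg ‖p.2.2‖
  refine ⟨?_, ?_, ?_⟩ <;> apply Real.le_sqrt_of_sq_le
  · rw [sq_abs]; linarith
  · rw [sq_abs]; linarith
  · linarith

/-- A facial error bound for the positive semidefinite cone: the compression `W = P Z P`, with `P` the
orthogonal projection onto `ker nZ`, lies on the face exposed by `nZ`, and `Z - W` is controlled by
`nZ * Z`. -/
lemma psd_facial (nZ : Matrix (Fin d) (Fin d) ℝ) (hnZ : nZ.PosSemidef) :
    ∃ c : ℝ, 0 < c ∧ ∀ Z : Matrix (Fin d) (Fin d) ℝ, Z.PosSemidef →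
      ∃ W : Matrix (Fin d) (Fin d) ℝ, W.PosSemidef ∧ (W * nZ).trace = 0 ∧
        ‖Z - W‖ ≤ c * ‖nZ * Z‖ := by
  obtain ⟨G, hG, hcomm, hGA⟩ := exists_pinv hnZ
  obtain ⟨Q, hQ⟩ : ∃ Q, Q = G * nZ := ⟨_, rfl⟩
  have hQH : Qᴴ = Q := by rw [hQ, conjTranspose_mul, hG, hnZ.1.eq, hcomm]
  have hPH : (1 - Q)ᴴ = 1 - Q := by rw [conjTranspose_sub, hQH, conjTranspose_one]
  -- the summand `1` only makes the constant positive
  refine ⟨(1 + ‖(1 - Q)‖) * ‖G‖ + 1, by positivity, fun Z hZ =>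
    ⟨(1 - Q) * Z * (1 - Q), ?_, ?_, ?_⟩⟩
  · have := hZ.mul_mul_conjTranspose_same (1 - Q)
    rwa [hPH] at this
  · rw [Matrix.mul_assoc, Matrix.sub_mul 1 Q nZ, hQ, hGA]
    simp
  · have hZQ : ‖Z * Q‖ = ‖Q * Z‖ := by
      rw [← frobenius_norm_conjTranspose, conjTranspose_mul, hQH, hZ.1.eq]
    have e : Z - (1 - Q) * Z * (1 - Q) = Q * Z + (1 - Q) * (Z * Q) := by noncomm_ring
    have hQZ : ‖Q * Z‖ ≤ ‖G‖ * ‖nZ * Z‖ := by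
      rw [hQ, Matrix.mul_assoc]; exact frobenius_norm_mul _ _
    rw [e]
    calc _ ≤ ‖Q * Z‖ + ‖(1 - Q) * (Z * Q)‖ := norm_add_le _ _
      _ ≤ ‖Q * Z‖ + ‖1 - Q‖ * ‖Z * Q‖ := by gcongr; exact frobenius_norm_mul _ _
      _ = (1 + ‖1 - Q‖) * ‖Q * Z‖ := by rw [hZQ]; ring
      _ ≤ (1 + ‖1 - Q‖) * (‖G‖ * ‖nZ * Z‖) := by gcongr
      _ ≤ _ := by nlinarith [norm_nonneg (nZ * Z)]


/-! ### Distance to the face -/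

lemma klogdet_posSemidef {p : E d} (hp : p ∈ Klogdet d) : p.2.2.PosSemidef := by
  rcases hp with ⟨-, h, -⟩ | ⟨-, -, h⟩
  · exact h.posSemidef
  · exact h

lemma posSemidef_isSymm {Z : Matrix (Fin d) (Fin d) ℝ} (hZ : Z.PosSemidef) : Z.IsSymm := by
  have h := hZ.1.eq
  rwa [conjTranspose_eq_transpose_of_trivial] at h

lemma neg_mul_log_le_one {u : ℝ} (hu : 0 < u) : u * (-Real.log u) ≤ 1 := by
  have h1 := Real.add_one_le_exp (-Real.log u)
  rw [Real.exp_neg, Real.exp_log hu] at h1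
  calc u * (-Real.log u) ≤ u * u⁻¹ := by gcongr; linarith
    _ = 1 := mul_inv_cancel₀ (ne_of_gt hu)

/-- A point of the cone within `t` of `q` produces a point of the face at distance
`O(1 / (-log t))` from `q`. -/
lemma point_bound (hd : 0 < d) (nZ : Matrix (Fin d) (Fin d) ℝ) (hnZ : nZ.PosSemidef)
    (hne : nZ ≠ 0) (η : ℝ) (hη : 0 < η) :
    ∃ κ : ℝ, 0 < κ ∧ ∀ q : E d, q.2.2.IsSymm → ip q (0, 0, nZ) = 0 → nrm q ≤ η →
      ∀ t : ℝ, 0 < t → t < 1 → ∀ p ∈ Klogdet d, nrm (q - p) ≤ t →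
      ∃ s : E d, (s.1 ≤ 0 ∧ s.2.1 = 0 ∧ s.2.2.PosSemidef ∧ (s.2.2 * nZ).trace = 0) ∧
        nrm (q - s) * (-Real.log t) ≤ κ := by
  have htr : 0 < nZ.trace :=
    lt_of_le_of_ne hnZ.trace_nonneg (fun h => hne (hnZ.trace_eq_zero_iff.mp h.symm))
  obtain ⟨K, hK, hadj⟩ := exists_adjugate_bound (d := d) (η + 1)
  obtain ⟨c₂, hc₂, hface⟩ := psd_facial nZ hnZ
  have hd' : (0 : ℝ) < d := by exact_mod_cast hd
  set c₁ := Real.sqrt (nZ.trace * (d * (η + 1)) * (d * ‖nZ‖)) + 1 with hc₁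
  have hc₁0 : 0 < c₁ := by positivity
  obtain ⟨C, hC, hscal⟩ := scalar_bound d hd (d * (K * c₁) / nZ.trace) (η + 1)
    (by positivity)
  refine ⟨2 * (3 + 2 * C + c₂ * c₁), by positivity, ?_⟩
  rintro ⟨x, y, Z⟩ hZs hip hq t ht0 ht1 ⟨x', y', Z'⟩ hp hqp
  have hZ' : Z'.PosSemidef := klogdet_posSemidef hp
  have hZ's := posSemidef_isSymm hZ'
  simp only at hZs
  obtain ⟨hx, hy, hz⟩ := le_nrm _ hZs |>.imp (·.trans hq) (And.imp (·.trans hq) (·.trans hq))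
  obtain ⟨hx', hy', hz'⟩ := le_nrm ((x, y, Z) - (x', y', Z') : E d) (hZs.sub hZ's)
    |>.imp (·.trans hqp) (And.imp (·.trans hqp) (·.trans hqp))
  simp only [Prod.mk_sub_mk] at hx hy hz hx' hy' hz'
  have hZ'n : ‖Z'‖ ≤ η + 1 := by
    calc ‖Z'‖ = ‖Z - (Z - Z')‖ := by simp
      _ ≤ ‖Z‖ + ‖Z - Z'‖ := norm_sub_le _ _
      _ ≤ _ := by linarith
  have hipZ : (Z * nZ).trace = 0 := by simpa [ip] using hip
  have hT : (Z' * nZ).trace ≤ d * ‖nZ‖ * t := by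
    calc (Z' * nZ).trace = -((Z - Z') * nZ).trace := by
          rw [Matrix.sub_mul, trace_sub, hipZ]; ring
      _ ≤ d * ‖(Z - Z') * nZ‖ := (neg_le_abs _).trans (abs_trace_le _)
      _ ≤ d * (‖Z - Z'‖ * ‖nZ‖) := by gcongr; exact frobenius_norm_mul _ _
      _ ≤ d * (t * ‖nZ‖) := by gcongr
      _ = _ := by ring
  set u := Real.sqrt t with hu
  have hu0 : 0 < u := Real.sqrt_pos.mpr ht0
  have hut : u ^ 2 = t := Real.sq_sqrt ht0.le
  have hu1 : u < 1 := by nlinarith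
  have hlog : Real.log t = 2 * Real.log u := by rw [← hut, Real.log_pow]; simp
  have hLu : 0 < -Real.log u := neg_pos.mpr (Real.log_neg hu0 hu1)
  have hNZ : ‖nZ * Z'‖ ≤ c₁ * u := by
    have h1 : ‖nZ * Z'‖ ^ 2 ≤ nZ.trace * (d * (η + 1)) * (d * ‖nZ‖) * t := by
      calc _ ≤ nZ.trace * Z'.trace * (Z' * nZ).trace := norm_mul_sq_le hnZ hZ'
        _ ≤ nZ.trace * Z'.trace * (d * ‖nZ‖ * t) := by
            have := hZ'.trace_nonneg
            gcongr
        _ ≤ nZ.trace * (d * (η + 1)) * (d * ‖nZ‖ * t) := by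
            gcongr
            exact (le_abs_self _).trans ((abs_trace_le _).trans (by gcongr))
        _ = _ := by ring
    have h2 := Real.le_sqrt_of_sq_le h1
    rw [Real.sqrt_mul (by positivity)] at h2
    refine h2.trans ?_
    rw [hc₁]
    gcongr
    linarith
  have hZN : ‖Z' * nZ‖ ≤ c₁ * u := by
    rw [← frobenius_norm_conjTranspose, conjTranspose_mul, hZ'.1.eq, hnZ.1.eq]
    exact hNZ
  have hxy : |y'| * (-Real.log u) ≤ C ∧ x' * (-Real.log u) ≤ C := by
    rcases hp with ⟨hy0, hPD, hle⟩ | ⟨hx0, hy0, -⟩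
    · simp only at hy0 hPD hle
      rw [abs_of_pos hy0]
      have hdet : Z'.det ≤ d * (K * c₁) / nZ.trace * u := by
        rw [div_mul_eq_mul_div, le_div_iff₀ htr]
        calc _ ≤ d * (‖adjugate Z'‖ * ‖Z' * nZ‖) := det_mul_trace_le
          _ ≤ d * (K * (c₁ * u)) := by gcongr; exact hadj _ hZ'n
          _ = _ := by ring
      refine hscal x' y' u hy0 hu0 hu1 ?_ ?_ (hle.trans ?_)
      · linarith [(abs_le.mp hx).1, (abs_le.mp hx').2]
      · linarith [(abs_le.mp hy).2, (abs_le.mp hy').1]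
      · gcongr
        rw [det_smul, Fintype.card_fin, Real.log_mul (by positivity) hPD.det_pos.ne',
          Real.log_pow, Real.log_inv]
        have := Real.log_le_log hPD.det_pos hdet
        rw [Real.log_mul (by positivity) hu0.ne'] at this
        linarith
    · simp only at hx0 hy0
      refine ⟨by rw [hy0]; simpa using hC.le, ?_⟩
      nlinarith
  obtain ⟨W, hW, hWn, hWd⟩ := hface Z' hZ'
  refine ⟨(min x' 0, 0, W), ⟨min_le_right _ _, rfl, hW, hWn⟩, ?_⟩
  have hnrm := nrm_le ((x, y, Z) - (min x' 0, 0, W) : E d) (hZs.sub (posSemidef_isSymm hW))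
  simp only [Prod.mk_sub_mk, sub_zero] at hnrm ⊢
  have htu : t ≤ u := by nlinarith
  have b1 : |x - min x' 0| ≤ u + max x' 0 := by
    calc |x - min x' 0| = |(x - x') + max x' 0| := by
          congr 1; linarith [min_add_max x' 0]
      _ ≤ |x - x'| + |max x' 0| := abs_add_le _ _
      _ ≤ _ := by rw [abs_of_nonneg (le_max_right x' 0)]; linarith
  have b2 : |y| ≤ u + |y'| := by
    have := abs_sub_abs_le_abs_sub y y'
    linarith
  have b3 : ‖Z - W‖ ≤ u + c₂ * c₁ * u := by
    calc ‖Z - W‖ = ‖(Z - Z') + (Z' - W)‖ := by congr 1; abel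
      _ ≤ ‖Z - Z'‖ + ‖Z' - W‖ := norm_add_le _ _
      _ ≤ u + c₂ * (c₁ * u) := by
          refine add_le_add (by linarith) (hWd.trans ?_)
          gcongr
      _ = _ := by ring
  have hmax : max x' 0 * (-Real.log u) ≤ C := by
    rcases max_choice x' 0 with h | h <;> rw [h]
    · exact hxy.2
    · simpa using hC.le
  have huL := neg_mul_log_le_one hu0
  rw [hlog]
  calc _ = 2 * (nrm (x - min x' 0, y, Z - W) * (-Real.log u)) := by ring
    _ ≤ 2 * (((3 + c₂ * c₁) * u + max x' 0 + |y'|) * (-Real.log u)) := by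
        gcongr
        linarith
    _ = 2 * ((3 + c₂ * c₁) * (u * (-Real.log u)) + max x' 0 * (-Real.log u)
          + |y'| * (-Real.log u)) := by ring
    _ ≤ 2 * ((3 + c₂ * c₁) * 1 + C + C) := by
        gcongr
        exact hxy.1
    _ = _ := by ring

end Frobenius

/-! ### Passage to the distance to the cone -/

lemma nrm_nonneg {d : ℕ} (p : E d) : 0 ≤ nrm p := Real.sqrt_nonneg _

lemma sdist_le {d : ℕ} {p s : E d} {S : Set (E d)} (hs : s ∈ S) : sdist p S ≤ nrm (p - s) :=
  csInf_le ⟨0, by rintro _ ⟨s, -, rfl⟩; exact nrm_nonneg _⟩ ⟨s, hs, rfl⟩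

lemma sdist_nonneg {d : ℕ} (p : E d) (S : Set (E d)) : 0 ≤ sdist p S :=
  Real.sInf_nonneg (by rintro _ ⟨s, -, rfl⟩; exact nrm_nonneg _)

lemma glog_tendsto {δ : ℝ} (hδ : 0 ≤ δ) :
    Tendsto glog (nhdsWithin δ (Set.Ioi δ)) (nhds (glog δ)) := by
  have he := Real.exp_pos (-2)
  have he1 : Real.exp (-2) < 1 := by rw [Real.exp_lt_one_iff]; norm_num
  by_cases h : δ < Real.exp (-2)
  · -- at `δ = 0` the junk value `Real.log 0 = 0` makes the logarithmic branch equal to `glog 0`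
    have e0 : glog δ = -1 / Real.log δ := by
      unfold glog
      split_ifs with h1 h2
      · simp [h1]
      · rfl
      · exact absurd h.le h2
    have ev : (fun t => -1 / Real.log t) =ᶠ[nhdsWithin δ (Set.Ioi δ)] glog := by
      filter_upwards [self_mem_nhdsWithin, mem_nhdsWithin_of_mem_nhds (Iio_mem_nhds h)] with t h1 h2
      have h1' : δ < t := h1
      have h2' : t < Real.exp (-2) := h2
      simp [glog, (hδ.trans_lt h1').ne', h2'.le]
    rw [e0]
    refine Tendsto.congr' ev ?_
    rcases hδ.eq_or_lt with rfl | hpos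
    · simp only [Real.log_zero, div_zero]
      exact Tendsto.const_div_atBot Real.tendsto_log_nhdsGT_zero _
    · refine Tendsto.mono_left ?_ nhdsWithin_le_nhds
      refine Tendsto.div tendsto_const_nhds (Real.continuousAt_log hpos.ne') ?_
      exact (Real.log_neg hpos (h.trans he1)).ne
  · push Not at h
    have hpos : 0 < δ := he.trans_le h
    have e0 : glog δ = 1 / 4 + Real.exp 2 / 4 * δ := by
      rcases h.eq_or_lt with rfl | h
      · rw [glog, if_neg hpos.ne', if_pos le_rfl, Real.log_exp, div_mul_eq_mul_div,
          ← Real.exp_add]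
        norm_num
      · rw [glog, if_neg hpos.ne', if_neg (not_le.mpr h)]
    have ev : (fun t => 1 / 4 + Real.exp 2 / 4 * t) =ᶠ[nhdsWithin δ (Set.Ioi δ)] glog := by
      filter_upwards [self_mem_nhdsWithin] with t h1
      have h1' : δ < t := h1
      rw [glog, if_neg (hpos.trans h1').ne', if_neg (not_le.mpr (h.trans_lt h1'))]
    rw [e0]
    refine Tendsto.congr' ev (Tendsto.mono_left ?_ nhdsWithin_le_nhds)
    exact (by fun_prop : Continuous fun t : ℝ => 1 / 4 + Real.exp 2 / 4 * t).tendsto δ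

/-- Theorem 3.3 (log-type error bound concerning `F_s` when `n_y = 0`): for `n = (0, 0, n_Z)`
with `n_Z ⪰ 0`, `0 < rank n_Z < d`, and any `η > 0` there is `κ > 0` with
`dist(q, F_s) ≤ κ g_log(dist(q, K_logdet))` for all `q ∈ {n}^⊥` with `‖q‖ ≤ η`. -/
theorem stmt_14 (d : ℕ) (hd : 2 ≤ d)
    (nZ : Matrix (Fin d) (Fin d) ℝ) (hnZ : nZ.PosSemidef)
    (hrank_pos : 0 < nZ.rank) (hrank_lt : nZ.rank < d) :
    ∀ η : ℝ, 0 < η → ∃ κ : ℝ, 0 < κ ∧ ∀ q : E d, q.2.2.IsSymm →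
      ip q (0, 0, nZ) = 0 → nrm q ≤ η →
      sdist q {p : E d | p.1 ≤ 0 ∧ p.2.1 = 0 ∧ p.2.2.PosSemidef ∧ (p.2.2 * nZ).trace = 0}
        ≤ κ * glog (sdist q (Klogdet d)) := by
  intro η hη
  have hne : nZ ≠ 0 := by
    rintro rfl
    simp at hrank_pos
  obtain ⟨κ, hκ, hpt⟩ := point_bound (by omega) nZ hnZ hne η hη
  refine ⟨max κ (2 * η), lt_max_of_lt_left hκ, fun q hqs hq hqn => ?_⟩
  set F : Set (E d) :=
    {p : E d | p.1 ≤ 0 ∧ p.2.1 = 0 ∧ p.2.2.PosSemidef ∧ (p.2.2 * nZ).trace = 0}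
  have he1 : Real.exp (-2) < 1 := by rw [Real.exp_lt_one_iff]; norm_num
  refine ge_of_tendsto ((glog_tendsto (sdist_nonneg q (Klogdet d))).const_mul _)
    (eventually_nhdsWithin_of_forall fun t (ht : sdist q (Klogdet d) < t) => ?_)
  have ht0 : 0 < t := (sdist_nonneg _ _).trans_lt ht
  by_cases h : t ≤ Real.exp (-2)
  · have hne : {r : ℝ | ∃ s ∈ Klogdet d, r = nrm (q - s)}.Nonempty :=
      ⟨_, 0, Or.inr ⟨le_rfl, rfl, PosSemidef.zero⟩, rfl⟩
    obtain ⟨_, ⟨p, hp, rfl⟩, hpt'⟩ := exists_lt_of_csInf_lt hne ht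
    obtain ⟨s, hs, hsb⟩ := hpt q hqs hq hqn t ht0 (h.trans_lt he1) p hp hpt'.le
    have hL : 0 < -Real.log t := neg_pos.mpr (Real.log_neg ht0 (h.trans_lt he1))
    have hg : glog t = 1 / (-Real.log t) := by
      rw [glog, if_neg ht0.ne', if_pos h, neg_div, div_neg]
    calc sdist q F ≤ nrm (q - s) := sdist_le hs
      _ ≤ κ * glog t := by rw [hg, mul_one_div, le_div_iff₀ hL]; exact hsb
      _ ≤ _ := by
        rw [hg]
        gcongr
        exact le_max_left _ _
  · push Not at h
    have hg : 1 / 2 ≤ glog t := by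
      rw [glog, if_neg ht0.ne', if_neg (not_le.mpr h)]
      have h1 : Real.exp 2 * Real.exp (-2) = 1 := by rw [← Real.exp_add]; norm_num
      nlinarith [Real.exp_pos 2]
    have h0 : (0 : E d) ∈ F := ⟨le_rfl, rfl, PosSemidef.zero, by simp⟩
    calc sdist q F ≤ nrm (q - 0) := sdist_le h0
      _ ≤ η := by simpa using hqn
      _ = 2 * η * (1 / 2) := by ring
      _ ≤ _ := by
        gcongr
        exact le_max_right _ _
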